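/- Let ℓ ≥ 2 be an integer, let x > 0 and s ∈ ℝ, let b_n := ((x·K_ℓ)^{1/(2ℓ)}/√(ℓ(ℓ−1))) · n^{(ℓ−1)/(2ℓ)}, x_n := x·e^{s/b_n}, and t_n := (Z_ℓ^{[ℓ]})^{−1}(n/x). Define J_{ℓ,n}(y,t) := (1/2π) ∫_{−π}^{π} e^{−q_{ℓ,n}(y,t,θ)} dθ. Then, as n → ∞, J_{ℓ,n}(x_n, t_n) ~ ((x·K_ℓ)^{1/(2ℓ)}/√(2πℓ)) · n^{−(ℓ+1)/(2ℓ)} · e^{−(ℓ−1)s²/2}, i.e. the ratio of the two sides tends to 1. -/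

import Mathlib

open Filter Topology Real MeasureTheory Asymptotics

noncomputable section

/-- Number of joint orbits of the subgroup generated by a tuple of permutations. -/
def kappa {ℓ n : ℕ} (σ : Fin ℓ → Equiv.Perm (Fin n)) : ℕ :=
  Nat.card (MulAction.orbitRel.Quotient (Subgroup.closure (Set.range σ)) (Fin n))

/-- `Acount ℓ n k` is the number of commuting `ℓ`-tuples of permutations of `{1,…,n}`
with exactly `k` joint orbits. -/
def Acount (ℓ n k : ℕ) : ℕ :=
  Nat.card {σ : Fin ℓ → Equiv.Perm (Fin n) //
    (∀ i j, σ i * σ j = σ j * σ i) ∧ kappa σ = k}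

/-- `Hpoly ℓ n x = (1/n!) ∑_k A(ℓ,n,k) x^k`. -/
def Hpoly (ℓ n : ℕ) (x : ℝ) : ℝ :=
  (1 / (n.factorial : ℝ)) * ∑ k ∈ Finset.range (n + 1), (Acount ℓ n k : ℝ) * x ^ k

/-- Expectation, under the Ewens-like measure `P_{ℓ,n,x}`, of `g(K_{ℓ,n})`. -/
def expectK (ℓ n : ℕ) (x : ℝ) (g : ℕ → ℝ) : ℝ :=
  (∑ k ∈ Finset.range (n + 1), g k * (Acount ℓ n k : ℝ) * x ^ k) /
    (∑ k ∈ Finset.range (n + 1), (Acount ℓ n k : ℝ) * x ^ k)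

/-- Mean of `K_{ℓ,n}` under `P_{ℓ,n,x}`. -/
def meanK (ℓ n : ℕ) (x : ℝ) : ℝ := expectK ℓ n x (fun k => (k : ℝ))

/-- Variance of `K_{ℓ,n}` under `P_{ℓ,n,x}`. -/
def varK (ℓ n : ℕ) (x : ℝ) : ℝ :=
  expectK ℓ n x (fun k => ((k : ℝ) - meanK ℓ n x) ^ 2)

/-- Real Riemann zeta values (as a series), `zetaR s = ∑_{m ≥ 1} m^{-s}`. -/
def zetaR (s : ℝ) : ℝ := ∑' m : ℕ, 1 / ((m : ℝ) + 1) ^ s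

/-- The constant `K_ℓ = (ℓ-1)! ζ(2)⋯ζ(ℓ)`. -/
def Kconst (ℓ : ℕ) : ℝ := ((ℓ - 1).factorial : ℝ) * ∏ j ∈ Finset.Icc 2 ℓ, zetaR (j : ℝ)

/-- The multiple series `Z^{[ℓ]}_{α_1,…,α_ℓ}(t)` with complex exponents. -/
def Zc (ℓ : ℕ) (α : Fin ℓ → ℂ) (t : ℝ) : ℂ :=
  ∑' δ : Fin ℓ → ℕ+,
    (∏ i, ((δ i : ℕ) : ℂ) ^ (α i - 1)) *
      Complex.exp (-(((∏ i, ((δ i : ℕ) : ℝ)) * t : ℝ) : ℂ))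

/-- The multiple series `Z^{[ℓ]}_{α_1,…,α_ℓ}(t)` with real exponents. -/
def Zr (ℓ : ℕ) (α : Fin ℓ → ℝ) (t : ℝ) : ℝ :=
  ∑' δ : Fin ℓ → ℕ+,
    (∏ i, ((δ i : ℕ) : ℝ) ^ (α i - 1)) *
      Real.exp (-(∏ i, ((δ i : ℕ) : ℝ)) * t)

/-- The staircase series `Z_m^{[ℓ]}(t) = Z^{[ℓ]}_{m,m-1,…,m-ℓ+1}(t)`. -/
def Zstair (ℓ : ℕ) (m : ℤ) (t : ℝ) : ℝ :=
  Zr ℓ (fun i => (m : ℝ) - (i : ℕ)) t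

/-- The inverse function `(Z_ℓ^{[ℓ]})^{-1} : (0,∞) → (0,∞)`. -/
def ZstairInv (ℓ : ℕ) (u : ℝ) : ℝ :=
  Function.invFunOn (Zstair ℓ ℓ) (Set.Ioi 0) u

/-- The function `q_{ℓ,n}(y,u,θ)` from the saddle point analysis. -/
def qfun (ℓ n : ℕ) (y u θ : ℝ) : ℂ :=
  Complex.I * (n : ℂ) * (θ : ℂ) - (y : ℂ) * ∑' δ : Fin ℓ → ℕ+,
    (∏ i, ((δ i : ℕ) : ℂ) ^ ((ℓ : ℤ) - 2 - (i : ℕ))) *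
      Complex.exp (-(((∏ i, ((δ i : ℕ) : ℝ)) * u : ℝ) : ℂ)) *
      (Complex.exp (Complex.I * (((∏ i, ((δ i : ℕ) : ℝ)) * θ : ℝ) : ℂ)) - 1)

/-- The normalizing sequence `b_n = ((x K_ℓ)^{1/(2ℓ)}/√(ℓ(ℓ-1))) n^{(ℓ-1)/(2ℓ)}`. -/
def bseq (ℓ : ℕ) (x : ℝ) (n : ℕ) : ℝ :=
  (x * Kconst ℓ) ^ ((1 : ℝ) / (2 * (ℓ : ℝ))) / Real.sqrt ((ℓ : ℝ) * ((ℓ : ℝ) - 1)) *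
    (n : ℝ) ^ (((ℓ : ℝ) - 1) / (2 * (ℓ : ℝ)))

/-- The sequence `x_n = x e^{s/b_n}`. -/
def xseq (ℓ : ℕ) (x s : ℝ) (n : ℕ) : ℝ := x * Real.exp (s / bseq ℓ x n)

/-- The saddle point sequence `t_n = (Z_ℓ^{[ℓ]})^{-1}(n/x)`. -/
def tseq (ℓ : ℕ) (x : ℝ) (n : ℕ) : ℝ := ZstairInv ℓ ((n : ℝ) / x)

end

/-!
The saddle point `t_n` makes the linear term of `q` vanish at `y = x`. On the scale
`θ = t_n^{(ℓ+1)/2} φ` the Taylor coefficients of `-q` at `θ = 0` converge: the first one to a drift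
caused by `x_n ≠ x`, the second one to `ℓ x K_ℓ`, while the cubic error vanishes. Hence the
rescaled integral tends to a Gaussian Fourier integral, provided the integrand is dominated.

The moments `t^{m+1} Z_{m+1}(t)` converge because summing over `δ₁` first leaves a sum over the
other indices weighted by `∏ δ_i^{-i}`, whose total is `ζ(2)⋯ζ(ℓ)`. The domination needs
`∑_δ (⋯)(1 - cos (δ₁⋯δ_ℓ θ))` to be large away from `θ = 0`; the tuples `(d, 1, …, 1)` with `d` of
order `1/t` already suffice for this.
-/

/-! ### Power-exponential sums -/

/-- The power-exponential series `∑_{d ≥ 1} d^k e^{-dτ}`, the inner sum of the staircase series. -/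
noncomputable def powExpSum (k : ℕ) (τ : ℝ) : ℝ := ∑' d : ℕ+, (d : ℝ) ^ k * exp (-(d * τ))

lemma summable_pow_mul_exp_neg_pnat (k : ℕ) {τ : ℝ} (hτ : 0 < τ) :
    Summable fun d : ℕ+ => (d : ℝ) ^ k * exp (-(d * τ)) := by
  have h := Real.summable_pow_mul_exp_neg_nat_mul k hτ
  refine (h.comp_injective PNat.coe_injective).congr fun d => ?_
  simp only [Function.comp_apply, neg_mul, mul_comm τ]

lemma powExpSum_nonneg (k : ℕ) (τ : ℝ) : 0 ≤ powExpSum k τ := tsum_nonneg fun _ => by positivity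

lemma powExpSum_eq_tsum_nat (k : ℕ) (τ : ℝ) :
    powExpSum k τ = ∑' n : ℕ, ((n : ℝ) + 1) ^ k * exp (-((n + 1) * τ)) := by
  rw [powExpSum, tsum_pnat_eq_tsum_succ (f := fun n : ℕ => (n : ℝ) ^ k * exp (-(n * τ)))]
  simp only [Nat.cast_add, Nat.cast_one]

lemma summable_succ_pow_mul_exp_neg (k : ℕ) {τ : ℝ} (hτ : 0 < τ) :
    Summable fun n : ℕ => ((n : ℝ) + 1) ^ k * exp (-((n + 1) * τ)) := by
  have h := summable_pnat_iff_summable_succ (f := fun n : ℕ => (n : ℝ) ^ k * exp (-(n * τ)))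
  simpa only [Nat.cast_add, Nat.cast_one] using h.1 (summable_pow_mul_exp_neg_pnat k hτ)

lemma hasSum_choose_mul_exp_neg (k : ℕ) {τ : ℝ} (hτ : 0 < τ) :
    HasSum (fun n : ℕ => ((n + k).choose k : ℝ) * exp (-(n * τ)))
      (1 / (1 - exp (-τ)) ^ (k + 1)) := by
  have hlt : ‖exp (-τ)‖ < 1 := by
    rw [Real.norm_of_nonneg (exp_nonneg _)]
    exact Real.exp_lt_one_iff.2 (neg_lt_zero.2 hτ)
  refine (hasSum_choose_mul_geometric_of_norm_lt_one k hlt).congr_fun fun n => ?_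
  rw [← Real.exp_nat_mul, mul_neg]

lemma powExpSum_le (k : ℕ) {τ : ℝ} (hτ : 0 < τ) :
    powExpSum k τ ≤ k.factorial * exp (-τ) * (1 / (1 - exp (-τ)) ^ (k + 1)) := by
  have hsum := (hasSum_choose_mul_exp_neg k hτ).mul_left (k.factorial * exp (-τ))
  rw [powExpSum_eq_tsum_nat, ← hsum.tsum_eq]
  refine (summable_succ_pow_mul_exp_neg k hτ).tsum_le_tsum (fun n => ?_) hsum.summable
  have hpow : ((n : ℝ) + 1) ^ k ≤ k.factorial * (n + k).choose k := by
    have := Nat.pow_succ_le_ascFactorial (n + 1) k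
    rw [Nat.ascFactorial_eq_factorial_mul_choose] at this
    exact_mod_cast this
  calc ((n : ℝ) + 1) ^ k * exp (-((n + 1) * τ))
      ≤ k.factorial * (n + k).choose k * exp (-((n + 1) * τ)) := by gcongr
    _ = k.factorial * exp (-τ) * ((n + k).choose k * exp (-(n * τ))) := by
      rw [show -(((n : ℝ) + 1) * τ) = -τ + -(n * τ) by ring, Real.exp_add]; ring

lemma le_powExpSum (k : ℕ) {τ : ℝ} (hτ : 0 < τ) :
    k.factorial * exp (-τ) ^ (k + 1) * (1 / (1 - exp (-τ)) ^ (k + 1)) ≤ powExpSum k τ := by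
  have hsum := (hasSum_choose_mul_exp_neg k hτ).mul_left (k.factorial * exp (-τ) ^ (k + 1))
  have hsummable := summable_succ_pow_mul_exp_neg k hτ
  rw [powExpSum_eq_tsum_nat, ← hsum.tsum_eq, ← hsummable.sum_add_tsum_nat_add k]
  refine le_add_of_nonneg_of_le (Finset.sum_nonneg fun i _ => by positivity) ?_
  refine hsum.summable.tsum_le_tsum (fun n => ?_) ((summable_nat_add_iff k).2 hsummable)
  have hpow : k.factorial * ((n + k).choose k : ℝ) ≤ ((n + k : ℕ) + 1 : ℝ) ^ k := by
    have := Nat.descFactorial_le_pow (n + k) k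
    rw [Nat.descFactorial_eq_factorial_mul_choose] at this
    exact_mod_cast this.trans (Nat.pow_le_pow_left (Nat.le_succ _) k)
  calc k.factorial * exp (-τ) ^ (k + 1) * ((n + k).choose k * exp (-(n * τ)))
      = k.factorial * (n + k).choose k * exp (-(((n + k : ℕ) + 1) * τ)) := by
        rw [← Real.exp_nat_mul, show -((((n + k : ℕ) : ℝ) + 1) * τ) =
          (k + 1 : ℕ) * -τ + -(n * τ) by push_cast; ring, Real.exp_add]
        ring
    _ ≤ _ := by gcongr

lemma pow_mul_powExpSum_le (k : ℕ) {τ : ℝ} (hτ : 0 < τ) :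
    τ ^ (k + 1) * powExpSum k τ ≤ k.factorial * ((k + 1).factorial * exp 1) := by
  have hlt : 0 < 1 - exp (-τ) := sub_pos.2 (Real.exp_lt_one_iff.2 (neg_lt_zero.2 hτ))
  have hquot : τ / (1 - exp (-τ)) ≤ 1 + τ := by
    have hexp : exp (-τ) * (1 + τ) ≤ 1 := by
      rw [Real.exp_neg, inv_mul_le_one₀ (exp_pos _), add_comm]
      exact Real.add_one_le_exp τ
    rw [div_le_iff₀ hlt]
    linarith
  have hpow : (1 + τ) ^ (k + 1) ≤ exp (1 + τ) * (k + 1).factorial :=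
    (div_le_iff₀ (by positivity)).1 (Real.pow_div_factorial_le_exp (1 + τ) (by positivity) _)
  calc τ ^ (k + 1) * powExpSum k τ
      ≤ τ ^ (k + 1) * (k.factorial * exp (-τ) * (1 / (1 - exp (-τ)) ^ (k + 1))) := by
        gcongr; exact powExpSum_le k hτ
    _ = k.factorial * (exp (-τ) * (τ / (1 - exp (-τ))) ^ (k + 1)) := by rw [div_pow]; ring
    _ ≤ k.factorial * (exp (-τ) * (1 + τ) ^ (k + 1)) := by gcongr
    _ ≤ k.factorial * (exp (-τ) * (exp (1 + τ) * (k + 1).factorial)) := by gcongr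
    _ = k.factorial * ((k + 1).factorial * exp 1) := by
        rw [show (1 : ℝ) = -τ + (1 + τ) by ring, Real.exp_add (-τ)]; ring_nf

lemma tendsto_div_one_sub_exp_neg :
    Tendsto (fun τ : ℝ => τ / (1 - exp (-τ))) (𝓝[>] 0) (𝓝 1) := by
  have hderiv : HasDerivAt (fun τ : ℝ => 1 - exp (-τ)) 1 0 := by
    simpa using ((hasDerivAt_neg (0 : ℝ)).exp).const_sub 1
  have hslope := hderiv.tendsto_slope_zero_right.inv₀ one_ne_zero
  rw [inv_one] at hslope
  refine hslope.congr fun τ => ?_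
  simp [div_eq_mul_inv, mul_comm]

lemma tendsto_pow_mul_powExpSum (k : ℕ) :
    Tendsto (fun τ => τ ^ (k + 1) * powExpSum k τ) (𝓝[>] 0) (𝓝 k.factorial) := by
  have hexp : Tendsto (fun τ : ℝ => exp (-τ)) (𝓝[>] 0) (𝓝 1) := by
    have : Continuous fun τ : ℝ => exp (-τ) := by fun_prop
    simpa using (this.tendsto 0).mono_left nhdsWithin_le_nhds
  have hquot := tendsto_div_one_sub_exp_neg.pow (k + 1)
  have hlower := ((hexp.pow (k + 1)).const_mul (k.factorial : ℝ)).mul hquot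
  have hupper := (hexp.const_mul (k.factorial : ℝ)).mul hquot
  simp only [one_pow, mul_one] at hlower hupper
  refine tendsto_of_tendsto_of_tendsto_of_le_of_le' hlower hupper ?_ ?_ <;>
    filter_upwards [self_mem_nhdsWithin] with τ (hτ : 0 < τ)
  · refine Eq.trans_le ?_ (mul_le_mul_of_nonneg_left (le_powExpSum k hτ) (by positivity))
    rw [div_pow]; ring
  · refine (mul_le_mul_of_nonneg_left (powExpSum_le k hτ) (by positivity)).trans_eq ?_
    rw [div_pow]; ring

/-! ### Lower bounds for sums of `1 - cos (d θ)` -/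

lemma one_sub_cos_nonneg (a : ℝ) : 0 ≤ 1 - cos a := sub_nonneg.2 (cos_le_one a)

lemma one_sub_cos_sub_le (a b : ℝ) : 1 - cos (a - b) ≤ 2 * ((1 - cos a) + (1 - cos b)) := by
  rw [cos_sub]
  nlinarith [sq_nonneg (cos a + cos b - 2), sq_nonneg (sin a + sin b),
    sin_sq_add_cos_sq a, sin_sq_add_cos_sq b]

lemma sum_Ico_one_sub_cos_ge_of_abs_le {N : ℕ} {θ : ℝ} (hN : 1 ≤ N) (hθ : |θ| ≤ π / (2 * N)) :
    2 * (N : ℝ) ^ 3 * θ ^ 2 / π ^ 2 ≤ ∑ d ∈ Finset.Ico N (2 * N), (1 - cos (d * θ)) := by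
  calc 2 * (N : ℝ) ^ 3 * θ ^ 2 / π ^ 2
      = ∑ d ∈ Finset.Ico N (2 * N), 2 / π ^ 2 * (N * θ) ^ 2 := by
        rw [Finset.sum_const, Nat.card_Ico, nsmul_eq_mul, show 2 * N - N = N by omega]
        ring
    _ ≤ ∑ d ∈ Finset.Ico N (2 * N), (1 - cos (d * θ)) := by
        refine Finset.sum_le_sum fun d hd => ?_
        obtain ⟨hNd, hdN⟩ := Finset.mem_Ico.1 hd
        have hdN' : (d : ℝ) ≤ 2 * N := by exact_mod_cast hdN.le
        have habs : |d * θ| ≤ π := by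
          rw [abs_mul, Nat.abs_cast]
          calc (d : ℝ) * |θ| ≤ 2 * N * (π / (2 * N)) := by gcongr
            _ = π := by field_simp
        calc 2 / π ^ 2 * (N * θ) ^ 2 ≤ 2 / π ^ 2 * (d * θ) ^ 2 := by
              rw [mul_pow, mul_pow]; gcongr
          _ ≤ 1 - cos (d * θ) := by linarith [Real.cos_le_one_sub_mul_cos_sq habs]

lemma exists_le_cos_nat_mul_nonpos {N : ℕ} {θ : ℝ} (hN : 1 ≤ N) (hθ : π / (2 * N) < |θ|)
    (hθπ : |θ| ≤ π) : ∃ m ≤ 2 * N, cos (m * θ) ≤ 0 := by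
  have hN' : (0 : ℝ) < N := by exact_mod_cast hN
  have hpos : 0 < |θ| := lt_of_le_of_lt (by positivity) hθ
  have hle : (⌊π / |θ|⌋₊ : ℝ) * |θ| ≤ π := (le_div_iff₀ hpos).1 (Nat.floor_le (by positivity))
  have hlt : π < (⌊π / |θ|⌋₊ + 1) * |θ| := (div_lt_iff₀ hpos).1 (Nat.lt_floor_add_one _)
  have hone : (1 : ℝ) ≤ ⌊π / |θ|⌋₊ := by
    exact_mod_cast (Nat.one_le_floor_iff _).2 ((one_le_div₀ hpos).2 hθπ)
  refine ⟨⌊π / |θ|⌋₊, Nat.floor_le_of_le ?_, ?_⟩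
  · rw [div_le_iff₀ hpos]
    rw [div_lt_iff₀ (by positivity)] at hθ
    push_cast
    linarith
  · rw [← cos_abs, abs_mul, Nat.abs_cast]
    exact cos_nonpos_of_pi_div_two_le_of_le (by nlinarith) (by linarith [pi_pos])

-- Of `d * θ` and `(d + m) * θ` with `cos (m * θ) ≤ 0`, at least one is far from `2πℤ`.
lemma div_four_le_sum_Ico_one_sub_cos {N m : ℕ} {θ : ℝ} (hm : m ≤ 2 * N) (hcos : cos (m * θ) ≤ 0) :
    (N : ℝ) / 4 ≤ ∑ d ∈ Finset.Ico N (4 * N), (1 - cos (d * θ)) := by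
  have hpair (d : ℕ) : 1 / 2 ≤ (1 - cos (d * θ)) + (1 - cos ((d + m : ℕ) * θ)) := by
    have h := one_sub_cos_sub_le ((d + m : ℕ) * θ) (d * θ)
    rw [show ((d + m : ℕ) : ℝ) * θ - d * θ = m * θ by push_cast; ring] at h
    linarith
  have hmono {a b : ℕ} (ha : N ≤ a) (hb : b ≤ 4 * N) : ∑ d ∈ Finset.Ico a b, (1 - cos (d * θ)) ≤
      ∑ d ∈ Finset.Ico N (4 * N), (1 - cos (d * θ)) :=
    Finset.sum_le_sum_of_subset_of_nonneg (Finset.Ico_subset_Ico ha hb)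
      fun _ _ _ => one_sub_cos_nonneg _
  have hsum : (N : ℝ) / 2 ≤ ∑ d ∈ Finset.Ico N (2 * N), (1 - cos (d * θ)) +
      ∑ d ∈ Finset.Ico N (2 * N), (1 - cos ((d + m : ℕ) * θ)) := by
    rw [← Finset.sum_add_distrib]
    refine le_trans (le_of_eq ?_) (Finset.card_nsmul_le_sum _ _ _ fun d _ => hpair d)
    rw [Nat.card_Ico, nsmul_eq_mul, show 2 * N - N = N by omega]
    ring
  rw [Finset.sum_Ico_add' (fun d : ℕ => 1 - cos (d * θ)) N (2 * N) m] at hsum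
  linarith [hmono le_rfl (show 2 * N ≤ 4 * N by omega),
    hmono (show N ≤ N + m by omega) (show 2 * N + m ≤ 4 * N by omega)]

lemma min_le_sum_Ico_one_sub_cos {N : ℕ} {θ : ℝ} (hN : 1 ≤ N) (hθ : |θ| ≤ π) :
    min (2 * (N : ℝ) ^ 3 * θ ^ 2 / π ^ 2) ((N : ℝ) / 4) ≤
      ∑ d ∈ Finset.Ico N (4 * N), (1 - cos (d * θ)) := by
  rcases le_or_gt |θ| (π / (2 * N)) with hsmall | hlarge
  · refine (min_le_left _ _).trans ((sum_Ico_one_sub_cos_ge_of_abs_le hN hsmall).trans ?_)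
    exact Finset.sum_le_sum_of_subset_of_nonneg (Finset.Ico_subset_Ico le_rfl (by omega))
      fun _ _ _ => one_sub_cos_nonneg _
  · obtain ⟨m, hm, hcos⟩ := exists_le_cos_nat_mul_nonpos hN hlarge hθ
    exact (min_le_right _ _).trans (div_four_le_sum_Ico_one_sub_cos hm hcos)

/-! ### Laplace's method on a shrinking scale -/

lemma norm_exp_I_mul_sub_taylor_le (u : ℝ) :
    ‖Complex.exp (Complex.I * u) - 1 - Complex.I * u + (u : ℂ) ^ 2 / 2‖ ≤ 4 * |u| ^ 3 := by
  have hI : ‖Complex.I * (u : ℂ)‖ = |u| := by simp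
  rcases le_or_gt |u| 1 with h | h
  · have htaylor : Complex.exp (Complex.I * u) - 1 - Complex.I * u + (u : ℂ) ^ 2 / 2 =
        Complex.exp (Complex.I * u) - ∑ m ∈ Finset.range 3, (Complex.I * u) ^ m / m.factorial := by
      simp [Finset.sum_range_succ, mul_pow]; ring
    have hbound := Complex.exp_bound (hI.trans_le h) (n := 3) (by norm_num)
    rw [hI] at hbound
    rw [htaylor, mul_comm 4]
    refine hbound.trans ?_
    gcongr
    norm_num [Nat.factorial]
  · have hexp : ‖Complex.exp (Complex.I * u) - 1‖ ≤ |u| := Real.norm_exp_I_mul_ofReal_sub_one_le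
    have hsq : ‖(u : ℂ) ^ 2 / 2‖ = |u| ^ 2 / 2 := by simp
    calc ‖Complex.exp (Complex.I * u) - 1 - Complex.I * u + (u : ℂ) ^ 2 / 2‖
        ≤ |u| + |u| + |u| ^ 2 / 2 := norm_add_le_of_le (norm_sub_le_of_le hexp hI.le) hsq.le
      _ ≤ 4 * |u| ^ 3 := by nlinarith [mul_pos (one_pos.trans h) (one_pos.trans h)]

lemma exp_neg_mul_min_le {c K u w : ℝ} (hc : 0 < c) (hK : 0 ≤ K) (hu : 0 ≤ u) (hw : 0 ≤ w)
    (huw : u ≤ K * w ^ 3) :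
    exp (-(c * min u w)) ≤ 6 * exp c * (1 + K) / c ^ 3 * (1 + u)⁻¹ := by
  set z := min u w
  have : 0 ≤ z := le_min hu hw
  have hcube : 1 + u ≤ (1 + K) * (1 + z) ^ 3 := by
    rcases min_choice u w with h | h <;> rw [show z = _ from h]
    · nlinarith [mul_nonneg hK (pow_nonneg (add_nonneg zero_le_one hu) 3), pow_nonneg hu 3]
    · nlinarith [mul_nonneg hK hw, mul_nonneg hK (pow_nonneg hw 2), pow_nonneg hw 3]
  have hexp : (c * (1 + z)) ^ 3 / 6 ≤ exp (c * (1 + z)) := by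
    simpa [Nat.factorial] using Real.pow_div_factorial_le_exp (c * (1 + z)) (by positivity) 3
  have hcube' : c ^ 3 * (1 + u) ≤ 6 * exp c * (1 + K) * exp (c * z) := by
    calc c ^ 3 * (1 + u) ≤ c ^ 3 * ((1 + K) * (1 + z) ^ 3) := by gcongr
      _ = (1 + K) * 6 * ((c * (1 + z)) ^ 3 / 6) := by ring
      _ ≤ (1 + K) * 6 * exp (c * (1 + z)) := by gcongr
      _ = 6 * exp c * (1 + K) * exp (c * z) := by rw [mul_add, mul_one, Real.exp_add]; ring
  rw [Real.exp_neg, ← div_eq_mul_inv, div_div, le_div_iff₀ (by positivity),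
    inv_mul_le_iff₀ (exp_pos _), mul_comm (exp _)]
  exact hcube'

lemma tendsto_mul_exp_div_sub_one (s : ℝ) :
    Tendsto (fun b : ℝ => b * (exp (s / b) - 1)) atTop (𝓝 s) := by
  have hderiv : HasDerivAt (fun v : ℝ => exp (s * v)) s 0 := by
    simpa using ((hasDerivAt_id (0 : ℝ)).const_mul s).exp
  refine (hderiv.tendsto_slope_zero_right.comp tendsto_inv_atTop_nhdsGT_zero).congr fun b => ?_
  simp [div_eq_mul_inv]

lemma integral_cexp_I_mul_sub_sq (c : ℝ) {σ : ℝ} (hσ : 0 < σ) :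
    ∫ φ : ℝ, Complex.exp (Complex.I * c * φ - (σ : ℂ) * φ ^ 2 / 2) =
      (√(2 * π / σ) * exp (-(c ^ 2 / (2 * σ))) : ℝ) := by
  have hσ' : (σ : ℂ) ≠ 0 := by exact_mod_cast hσ.ne'
  have hfourier := fourierIntegral_gaussian (b := (σ / 2 : ℝ)) (by simpa using hσ) c
  have hsplit (φ : ℝ) : Complex.exp (Complex.I * c * φ - (σ : ℂ) * φ ^ 2 / 2) =
      Complex.exp (Complex.I * c * φ) * Complex.exp (-((σ / 2 : ℝ) : ℂ) * φ ^ 2) := by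
    rw [← Complex.exp_add]; congr 1; push_cast; ring
  simp_rw [hsplit, hfourier]
  rw [Complex.ofReal_mul, Real.sqrt_eq_rpow, Complex.ofReal_cpow (by positivity)]
  push_cast
  congr 2
  · field_simp
  · field_simp
    ring

lemma inv_smul_intervalIntegral_eq_integral_indicator {E : Type*} [NormedAddCommGroup E]
    [NormedSpace ℝ E] (f : ℝ → E) {a ρ : ℝ} (ha : 0 ≤ a) (hρ : 0 < ρ) :
    ρ⁻¹ • ∫ θ in (-a)..a, f θ =
      ∫ φ, (Set.Ioc (-(a / ρ)) (a / ρ)).indicator (fun φ => f (ρ * φ)) φ := by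
  have hle : -(a / ρ) ≤ a / ρ := neg_le_self (by positivity)
  rw [integral_indicator measurableSet_Ioc, ← intervalIntegral.integral_of_le hle,
    intervalIntegral.integral_comp_mul_left _ hρ.ne', mul_neg, mul_div_cancel₀ _ hρ.ne']

lemma tendsto_inv_smul_intervalIntegral_of_rescaled {ι E : Type*} [NormedAddCommGroup E]
    [NormedSpace ℝ E] {l : Filter ι} [l.IsCountablyGenerated] {f : ι → ℝ → E} {g : ℝ → E}
    {ρ : ι → ℝ} {bound : ℝ → ℝ} {a : ℝ} (ha : 0 < a) (hρ : Tendsto ρ l (𝓝[>] 0))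
    (hcont : ∀ᶠ n in l, Continuous (f n))
    (hbound : ∀ᶠ n in l, ∀ φ, |ρ n * φ| ≤ a → ‖f n (ρ n * φ)‖ ≤ bound φ)
    (hint : Integrable bound) (hlim : ∀ φ, Tendsto (fun n => f n (ρ n * φ)) l (𝓝 (g φ))) :
    Tendsto (fun n => (ρ n)⁻¹ • ∫ θ in (-a)..a, f n θ) l (𝓝 (∫ φ, g φ)) := by
  have hρ0 : ∀ᶠ n in l, 0 < ρ n := hρ.eventually self_mem_nhdsWithin
  have hmem {n : ι} (hn : 0 < ρ n) (φ : ℝ) : |ρ n * φ| ≤ a ↔ |φ| ≤ a / ρ n := by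
    rw [abs_mul, abs_of_pos hn, le_div_iff₀' hn]
  suffices Tendsto (fun n => ∫ φ, (Set.Ioc (-(a / ρ n)) (a / ρ n)).indicator
      (fun φ => f n (ρ n * φ)) φ) l (𝓝 (∫ φ, g φ)) from this.congr' <| by
    filter_upwards [hρ0] with n hn
    rw [inv_smul_intervalIntegral_eq_integral_indicator _ ha.le hn]
  refine tendsto_integral_filter_of_dominated_convergence (fun φ => |bound φ|) ?_ ?_ hint.abs ?_
  · filter_upwards [hcont] with n hn
    exact (hn.comp (continuous_const_mul _)).aestronglyMeasurable.indicator measurableSet_Ioc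
  · filter_upwards [hρ0, hbound] with n hn hbound
    refine .of_forall fun φ => ?_
    by_cases hφ : φ ∈ Set.Ioc (-(a / ρ n)) (a / ρ n)
    · rw [Set.indicator_of_mem hφ]
      exact (hbound φ ((hmem hn φ).2 (abs_le.2 ⟨hφ.1.le, hφ.2⟩))).trans (le_abs_self _)
    · rw [Set.indicator_of_notMem hφ, norm_zero]
      exact abs_nonneg _
  · refine .of_forall fun φ => (hlim φ).congr' ?_
    have hzero : Tendsto (fun n => ρ n * |φ|) l (𝓝 0) := by
      simpa using (hρ.mono_right nhdsWithin_le_nhds).mul_const |φ|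
    filter_upwards [hρ0, hzero.eventually_lt_const ha] with n hn hlt
    have hφ := abs_lt.1 ((lt_div_iff₀' hn).2 hlt)
    rw [Set.indicator_of_mem (Set.mem_Ioc.2 ⟨hφ.1, hφ.2.le⟩)]

/-! ### Zeta products as multiple series -/

lemma hasSum_fin_prod_of_nonneg {p : ℕ} {α : Fin p → Type*} {f : ∀ i, α i → ℝ} {S : Fin p → ℝ}
    (hf : ∀ i a, 0 ≤ f i a) (hS : ∀ i, HasSum (f i) (S i)) :
    HasSum (fun δ : ∀ i, α i => ∏ i, f i (δ i)) (∏ i, S i) := by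
  induction p with
  | zero => simp
  | succ p ih =>
    have htail := ih (fun i => hf i.succ) fun i => hS i.succ
    have hsummable := (hS 0).summable.mul_of_nonneg htail.summable (hf 0)
      fun δ => Finset.prod_nonneg fun i _ => hf i.succ (δ i)
    rw [Fin.prod_univ_succ, ← (Fin.consEquiv α).hasSum_iff]
    refine ((hS 0).mul htail hsummable).congr_fun fun q => ?_
    simp [Fin.prod_univ_succ, Fin.consEquiv]

/-- `ζ(2)ζ(3)⋯ζ(p + 1)`, the zeta factor of `Kconst (p + 1)`. -/
noncomputable def zetaProd (p : ℕ) : ℝ := ∏ j ∈ Finset.Icc 2 (p + 1), zetaR j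

/-- The weight `∏ᵢ δᵢ^{-(i+2)}` (with `i` counted from `0`), whose total mass is `zetaProd p`. -/
noncomputable def zetaWeight {p : ℕ} (δ : Fin p → ℕ+) : ℝ := ∏ i, ((δ i : ℝ) ^ ((i : ℕ) + 2))⁻¹

lemma hasSum_zetaR {j : ℕ} (hj : 2 ≤ j) : HasSum (fun d : ℕ+ => ((d : ℝ) ^ j)⁻¹) (zetaR j) := by
  have hsummable : Summable fun n : ℕ => ((n : ℝ) ^ j)⁻¹ := Real.summable_nat_pow_inv.2 (by omega)
  have hzeta : zetaR j = ∑' n : ℕ, (((n + 1 : ℕ) : ℝ) ^ j)⁻¹ := by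
    simp only [zetaR, Real.rpow_natCast, one_div, Nat.cast_add, Nat.cast_one]
  rw [hasSum_pnat_iff_hasSum_succ (f := fun n : ℕ => ((n : ℝ) ^ j)⁻¹), hzeta]
  exact ((summable_nat_add_iff 1).2 hsummable).hasSum

lemma zetaR_pos {j : ℕ} (hj : 2 ≤ j) : 0 < zetaR j := by
  rw [← (hasSum_zetaR hj).tsum_eq]
  exact (hasSum_zetaR hj).summable.tsum_pos (fun d => by positivity) 1 (by simp)

lemma zetaProd_pos (p : ℕ) : 0 < zetaProd p :=
  Finset.prod_pos fun _ hj => zetaR_pos (Finset.mem_Icc.1 hj).1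

lemma Kconst_succ (p : ℕ) : Kconst (p + 1) = p.factorial * zetaProd p := rfl

lemma Kconst_succ_pos (p : ℕ) : 0 < Kconst (p + 1) :=
  mul_pos (by positivity) (zetaProd_pos p)

lemma zetaWeight_nonneg {p : ℕ} (δ : Fin p → ℕ+) : 0 ≤ zetaWeight δ :=
  Finset.prod_nonneg fun _ _ => by positivity

lemma hasSum_zetaWeight (p : ℕ) : HasSum (zetaWeight (p := p)) (zetaProd p) := by
  have hprod : ∏ i : Fin p, zetaR ((i : ℕ) + 2 : ℕ) = zetaProd p := by
    rw [Fin.prod_univ_eq_prod_range (fun i : ℕ => zetaR (i + 2 : ℕ)), Finset.range_eq_Ico,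
      Finset.prod_Ico_add' (fun i : ℕ => zetaR i) 0 p 2]
    rfl
  rw [← hprod]
  exact hasSum_fin_prod_of_nonneg (f := fun i (d : ℕ+) => ((d : ℝ) ^ ((i : ℕ) + 2))⁻¹)
    (fun i d => by positivity) fun i => hasSum_zetaR (by omega)

/-! ### The staircase series and its inverse -/

/-- The product `δ₁⋯δ_ℓ` of a tuple of positive integers. -/
noncomputable def tupleProd {ℓ : ℕ} (δ : Fin ℓ → ℕ+) : ℝ := ∏ i, (δ i : ℝ)

/-- The summand of the staircase series `Zstair ℓ m t`. -/
noncomputable def stairTerm {ℓ : ℕ} (m : ℕ) (t : ℝ) (δ : Fin ℓ → ℕ+) : ℝ :=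
  (∏ i, (δ i : ℝ) ^ ((m : ℤ) - 1 - (i : ℕ))) * exp (-(tupleProd δ * t))

lemma tupleProd_pos {ℓ : ℕ} (δ : Fin ℓ → ℕ+) : 0 < tupleProd δ :=
  Finset.prod_pos fun i _ => by exact_mod_cast (δ i).pos

lemma tupleProd_cons {p : ℕ} (d : ℕ+) (δ : Fin p → ℕ+) :
    tupleProd (Fin.cons d δ : Fin (p + 1) → ℕ+) = d * tupleProd δ := by
  simp [tupleProd, Fin.prod_univ_succ]

lemma stairTerm_nonneg {ℓ : ℕ} (m : ℕ) (t : ℝ) (δ : Fin ℓ → ℕ+) : 0 ≤ stairTerm m t δ :=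
  mul_nonneg (Finset.prod_nonneg fun _ _ => by positivity) (exp_nonneg _)

lemma stairTerm_le_stairTerm {ℓ : ℕ} (m : ℕ) {u t : ℝ} (hut : u ≤ t) (δ : Fin ℓ → ℕ+) :
    stairTerm m t δ ≤ stairTerm m u δ := by
  have := tupleProd_pos δ
  unfold stairTerm
  gcongr

lemma stairTerm_add {ℓ : ℕ} (m k : ℕ) (t : ℝ) (δ : Fin ℓ → ℕ+) :
    stairTerm (m + k) t δ = stairTerm m t δ * tupleProd δ ^ k := by
  have hfactor (i : Fin ℓ) : (δ i : ℝ) ^ (((m + k : ℕ) : ℤ) - 1 - (i : ℕ)) =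
      (δ i : ℝ) ^ ((m : ℤ) - 1 - (i : ℕ)) * (δ i : ℝ) ^ k := by
    rw [← zpow_natCast, ← zpow_add₀ (by positivity)]
    congr 1
    push_cast
    ring
  simp only [stairTerm, tupleProd, hfactor, Finset.prod_mul_distrib, Finset.prod_pow]
  ring

lemma Zstair_eq_tsum_stairTerm (ℓ m : ℕ) (t : ℝ) :
    Zstair ℓ m t = ∑' δ : Fin ℓ → ℕ+, stairTerm m t δ := by
  refine tsum_congr fun δ => ?_
  rw [stairTerm, tupleProd, neg_mul]
  congr 1
  refine Finset.prod_congr rfl fun i _ => ?_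
  rw [← Real.rpow_intCast]
  push_cast
  ring_nf

lemma stairTerm_succ_cons {p : ℕ} (m : ℕ) (t : ℝ) (d : ℕ+) (δ : Fin p → ℕ+) :
    stairTerm (m + 1) t (Fin.cons d δ : Fin (p + 1) → ℕ+) =
      zetaWeight δ * tupleProd δ ^ (m + 1) * (d ^ m * exp (-(d * (tupleProd δ * t)))) := by
  have hfactor (i : Fin p) : (δ i : ℝ) ^ (((m + 1 : ℕ) : ℤ) - 1 - (i.succ : ℕ)) =
      ((δ i : ℝ) ^ ((i : ℕ) + 2))⁻¹ * (δ i : ℝ) ^ (m + 1) := by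
    rw [← zpow_natCast, ← zpow_natCast, ← zpow_neg, ← zpow_add₀ (by positivity), Fin.val_succ]
    congr 1
    push_cast
    ring
  rw [stairTerm, Fin.prod_univ_succ, tupleProd_cons, zetaWeight, tupleProd, ← Finset.prod_pow,
    ← Finset.prod_mul_distrib]
  simp only [Fin.cons_zero, Fin.cons_succ, hfactor, Fin.val_zero]
  rw [show ((m + 1 : ℕ) : ℤ) - 1 - ((0 : ℕ) : ℤ) = m by simp, zpow_natCast,
    mul_assoc (d : ℝ), mul_assoc, mul_left_comm]

/-- Splitting off the first entry of a tuple, in the order in which the sums are carried out: the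
entry `q.2` is summed first. -/
def consPairEquiv (p : ℕ) : (Fin p → ℕ+) × ℕ+ ≃ (Fin (p + 1) → ℕ+) :=
  (Equiv.prodComm _ _).trans (Fin.consEquiv fun _ => ℕ+)

lemma consPairEquiv_apply {p : ℕ} (q : (Fin p → ℕ+) × ℕ+) :
    consPairEquiv p q = Fin.cons q.2 q.1 := rfl

lemma tsum_stairTerm_succ_cons {p : ℕ} (m : ℕ) (t : ℝ) (δ : Fin p → ℕ+) :
    ∑' d : ℕ+, stairTerm (m + 1) t (Fin.cons d δ : Fin (p + 1) → ℕ+) =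
      zetaWeight δ * tupleProd δ ^ (m + 1) * powExpSum m (tupleProd δ * t) := by
  simp_rw [stairTerm_succ_cons]
  exact tsum_mul_left

lemma pow_mul_zetaWeight_mul_powExpSum {p : ℕ} (m : ℕ) (t : ℝ) (δ : Fin p → ℕ+) :
    t ^ (m + 1) * (zetaWeight δ * tupleProd δ ^ (m + 1) * powExpSum m (tupleProd δ * t)) =
      zetaWeight δ * ((tupleProd δ * t) ^ (m + 1) * powExpSum m (tupleProd δ * t)) := by
  rw [mul_pow]; ring

lemma zetaWeight_mul_powExpSum_le {p : ℕ} (m : ℕ) {t : ℝ} (ht : 0 < t) (δ : Fin p → ℕ+) :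
    zetaWeight δ * ((tupleProd δ * t) ^ (m + 1) * powExpSum m (tupleProd δ * t)) ≤
      zetaWeight δ * (m.factorial * ((m + 1).factorial * exp 1)) :=
  mul_le_mul_of_nonneg_left (pow_mul_powExpSum_le m (mul_pos (tupleProd_pos δ) ht))
    (zetaWeight_nonneg δ)

lemma summable_zetaWeight_mul_powExpSum (p m : ℕ) {t : ℝ} (ht : 0 < t) :
    Summable fun δ : Fin p → ℕ+ =>
      zetaWeight δ * ((tupleProd δ * t) ^ (m + 1) * powExpSum m (tupleProd δ * t)) := by
  refine .of_nonneg_of_le (fun δ => ?_) (zetaWeight_mul_powExpSum_le m ht)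
    ((hasSum_zetaWeight p).summable.mul_right _)
  have := tupleProd_pos δ
  exact mul_nonneg (zetaWeight_nonneg δ) (mul_nonneg (by positivity) (powExpSum_nonneg m _))

lemma summable_stairTerm (p m : ℕ) {t : ℝ} (ht : 0 < t) :
    Summable fun δ : Fin (p + 1) → ℕ+ => stairTerm (m + 1) t δ := by
  rw [← (consPairEquiv p).summable_iff]
  refine (summable_prod_of_nonneg fun q => stairTerm_nonneg _ _ _).2 ⟨fun δ => ?_, ?_⟩
  · simp only [consPairEquiv_apply, stairTerm_succ_cons]
    exact (summable_pow_mul_exp_neg_pnat m (mul_pos (tupleProd_pos δ) ht)).mul_left _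
  · simp only [consPairEquiv_apply, tsum_stairTerm_succ_cons]
    rw [← summable_mul_left_iff (pow_pos ht (m + 1)).ne']
    simp_rw [pow_mul_zetaWeight_mul_powExpSum]
    exact summable_zetaWeight_mul_powExpSum p m ht

lemma pow_mul_Zstair_eq_tsum (p m : ℕ) {t : ℝ} (ht : 0 < t) :
    t ^ (m + 1) * Zstair (p + 1) (m + 1 : ℕ) t = ∑' δ : Fin p → ℕ+,
      zetaWeight δ * ((tupleProd δ * t) ^ (m + 1) * powExpSum m (tupleProd δ * t)) := by
  have hsummable : Summable fun q => stairTerm (m + 1) t (consPairEquiv p q) :=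
    (consPairEquiv p).summable_iff.2 (summable_stairTerm p m ht)
  rw [Zstair_eq_tsum_stairTerm, ← (consPairEquiv p).tsum_eq, hsummable.tsum_prod, ← tsum_mul_left]
  refine tsum_congr fun δ => ?_
  simp only [consPairEquiv_apply, tsum_stairTerm_succ_cons,
    pow_mul_zetaWeight_mul_powExpSum]

lemma pow_mul_Zstair_le (p m : ℕ) {t : ℝ} (ht : 0 < t) :
    t ^ (m + 1) * Zstair (p + 1) (m + 1 : ℕ) t ≤
      zetaProd p * (m.factorial * ((m + 1).factorial * exp 1)) := by
  rw [pow_mul_Zstair_eq_tsum p m ht, ← (hasSum_zetaWeight p).tsum_eq, ← tsum_mul_right]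
  exact (summable_zetaWeight_mul_powExpSum p m ht).tsum_le_tsum (zetaWeight_mul_powExpSum_le m ht)
    ((hasSum_zetaWeight p).summable.mul_right _)

lemma tendsto_pow_mul_Zstair (p m : ℕ) :
    Tendsto (fun t => t ^ (m + 1) * Zstair (p + 1) (m + 1 : ℕ) t) (𝓝[>] 0)
      (𝓝 (m.factorial * zetaProd p)) := by
  have hlim : Tendsto (fun t : ℝ => ∑' δ : Fin p → ℕ+,
      zetaWeight δ * ((tupleProd δ * t) ^ (m + 1) * powExpSum m (tupleProd δ * t))) (𝓝[>] 0)
      (𝓝 (∑' δ : Fin p → ℕ+, zetaWeight δ * m.factorial)) := by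
    refine tendsto_tsum_of_dominated_convergence
      ((hasSum_zetaWeight p).summable.mul_right (m.factorial * ((m + 1).factorial * exp 1)))
      (fun δ => ?_) ?_
    · have hscale : Tendsto (fun t => tupleProd δ * t) (𝓝[>] 0) (𝓝[>] 0) :=
        tendsto_iff_comap.2 (comap_mulLeft_nhdsGT_zero (tupleProd_pos δ)).ge
      exact ((tendsto_pow_mul_powExpSum m).comp hscale).const_mul _
    · filter_upwards [self_mem_nhdsWithin] with t (ht : 0 < t) δ
      have := tupleProd_pos δ
      rw [Real.norm_of_nonneg (mul_nonneg (zetaWeight_nonneg δ)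
        (mul_nonneg (by positivity) (powExpSum_nonneg m _)))]
      exact zetaWeight_mul_powExpSum_le m ht δ
  rw [tsum_mul_right, (hasSum_zetaWeight p).tsum_eq, mul_comm] at hlim
  refine hlim.congr' ?_
  filter_upwards [self_mem_nhdsWithin] with t ht using (pow_mul_Zstair_eq_tsum p m ht).symm

lemma Zstair_nonneg (ℓ m : ℕ) (t : ℝ) : 0 ≤ Zstair ℓ m t := by
  rw [Zstair_eq_tsum_stairTerm]
  exact tsum_nonneg fun δ => stairTerm_nonneg m t δ

lemma continuousOn_Zstair (p m : ℕ) :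
    ContinuousOn (Zstair (p + 1) (m + 1 : ℕ)) (Set.Ioi 0) := by
  intro t (ht : 0 < t)
  have hcont : ContinuousOn (Zstair (p + 1) (m + 1 : ℕ)) (Set.Ioi (t / 2)) := by
    simp_rw [funext (Zstair_eq_tsum_stairTerm (p + 1) (m + 1))]
    refine continuousOn_tsum (fun δ => ?_) (summable_stairTerm p m (half_pos ht)) ?_
    · unfold stairTerm; fun_prop
    · intro δ u (hu : t / 2 < u)
      rw [Real.norm_of_nonneg (stairTerm_nonneg _ _ _)]
      exact stairTerm_le_stairTerm (m + 1) hu.le δ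
  exact (hcont.continuousAt (Ioi_mem_nhds (half_lt_self ht))).continuousWithinAt

lemma tendsto_Zstair_nhdsGT_zero (p m : ℕ) :
    Tendsto (Zstair (p + 1) (m + 1 : ℕ)) (𝓝[>] 0) atTop := by
  have hpow : Tendsto (fun t : ℝ => t ^ (m + 1)) (𝓝[>] 0) (𝓝[>] 0) := by
    refine tendsto_nhdsWithin_iff.2 ⟨?_, ?_⟩
    · exact ((continuous_pow (m + 1)).tendsto' 0 0 (zero_pow m.succ_ne_zero)).mono_left
        nhdsWithin_le_nhds
    · filter_upwards [self_mem_nhdsWithin] with t (ht : 0 < t) using pow_pos ht _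
  have hlim := (tendsto_inv_nhdsGT_zero.comp hpow).atTop_mul_pos
    (mul_pos (Nat.cast_pos.2 m.factorial_pos) (zetaProd_pos p)) (tendsto_pow_mul_Zstair p m)
  refine hlim.congr' ?_
  filter_upwards [self_mem_nhdsWithin] with t (ht : 0 < t)
  exact inv_mul_cancel_left₀ (pow_pos ht _).ne' _

lemma tendsto_Zstair_atTop (p m : ℕ) :
    Tendsto (Zstair (p + 1) (m + 1 : ℕ)) atTop (𝓝 0) := by
  have hdecay : Tendsto (fun t : ℝ => zetaProd p * (m.factorial * ((m + 1).factorial * exp 1)) /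
      t ^ (m + 1)) atTop (𝓝 0) :=
    tendsto_const_nhds.div_atTop (tendsto_pow_atTop m.succ_ne_zero)
  refine squeeze_zero' (.of_forall fun t => Zstair_nonneg _ _ t) ?_ hdecay
  filter_upwards [eventually_gt_atTop 0] with t ht
  rw [le_div_iff₀' (pow_pos ht _)]
  exact pow_mul_Zstair_le p m ht

lemma surjOn_Zstair (p m : ℕ) :
    Set.SurjOn (Zstair (p + 1) (m + 1 : ℕ)) (Set.Ioi 0) (Set.Ioi 0) :=
  isPreconnected_Ioi.intermediate_value_Ioi (le_principal_iff.2 (Ioi_mem_atTop 0))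
    (le_principal_iff.2 self_mem_nhdsWithin) (continuousOn_Zstair p m) (tendsto_Zstair_atTop p m)
    (tendsto_Zstair_nhdsGT_zero p m)

lemma ZstairInv_pos (p : ℕ) {u : ℝ} (hu : 0 < u) : 0 < ZstairInv (p + 1) u :=
  Function.invFunOn_mem (surjOn_Zstair p p hu)

lemma Zstair_ZstairInv (p : ℕ) {u : ℝ} (hu : 0 < u) :
    Zstair (p + 1) (p + 1 : ℕ) (ZstairInv (p + 1) u) = u :=
  Function.invFunOn_eq (surjOn_Zstair p p hu)

lemma tendsto_ZstairInv_atTop (p : ℕ) : Tendsto (ZstairInv (p + 1)) atTop (𝓝[>] 0) := by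
  refine tendsto_nhdsWithin_iff.2
    ⟨?_, (eventually_gt_atTop 0).mono fun u hu => ZstairInv_pos p hu⟩
  have hpow : Tendsto (fun u => ZstairInv (p + 1) u ^ (p + 1)) atTop (𝓝 0) := by
    have hdecay : Tendsto (fun u => zetaProd p * (p.factorial * ((p + 1).factorial * exp 1)) / u)
        atTop (𝓝 0) := tendsto_const_nhds.div_atTop tendsto_id
    refine squeeze_zero' ?_ ?_ hdecay
    · filter_upwards [eventually_gt_atTop 0] with u hu using pow_nonneg (ZstairInv_pos p hu).le _
    · filter_upwards [eventually_gt_atTop 0] with u hu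
      rw [le_div_iff₀ hu]
      simpa only [Zstair_ZstairInv p hu] using pow_mul_Zstair_le p p (ZstairInv_pos p hu)
  have hroot := hpow.rpow_const (p := ((p + 1 : ℕ) : ℝ)⁻¹) (.inr (by positivity))
  rw [Real.zero_rpow (by positivity)] at hroot
  refine hroot.congr' ?_
  filter_upwards [eventually_gt_atTop 0] with u hu
  exact Real.pow_rpow_inv_natCast (ZstairInv_pos p hu).le p.succ_ne_zero

lemma tseq_pos (p : ℕ) {x : ℝ} (hx : 0 < x) {n : ℕ} (hn : 0 < n) : 0 < tseq (p + 1) x n :=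
  ZstairInv_pos p (by positivity)

lemma Zstair_tseq (p : ℕ) {x : ℝ} (hx : 0 < x) {n : ℕ} (hn : 0 < n) :
    Zstair (p + 1) (p + 1 : ℕ) (tseq (p + 1) x n) = n / x :=
  Zstair_ZstairInv p (by positivity)

lemma tendsto_tseq (p : ℕ) {x : ℝ} (hx : 0 < x) : Tendsto (tseq (p + 1) x) atTop (𝓝[>] 0) :=
  (tendsto_ZstairInv_atTop p).comp (tendsto_natCast_atTop_atTop.atTop_div_const hx)

lemma tendsto_natCast_mul_tseq_pow (p : ℕ) {x : ℝ} (hx : 0 < x) :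
    Tendsto (fun n : ℕ => n * tseq (p + 1) x n ^ (p + 1)) atTop (𝓝 (x * Kconst (p + 1))) := by
  rw [Kconst_succ]
  refine (((tendsto_pow_mul_Zstair p p).comp (tendsto_tseq p hx)).const_mul x).congr' ?_
  filter_upwards [eventually_gt_atTop 0] with n hn
  rw [Function.comp_apply, Zstair_tseq p hx hn]
  field_simp

/-! ### The cosine defect -/

/-- The amount by which the real part of the staircase series drops when each exponential
`e^{-δ₁⋯δ_ℓ t}` is rotated by `e^{i δ₁⋯δ_ℓ θ}`. -/
noncomputable def cosDefect (ℓ m : ℕ) (t θ : ℝ) : ℝ :=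
  ∑' δ : Fin ℓ → ℕ+, stairTerm m t δ * (1 - cos (tupleProd δ * θ))

lemma stairTerm_mul_one_sub_cos_nonneg {ℓ : ℕ} (m : ℕ) (t u : ℝ) (δ : Fin ℓ → ℕ+) :
    0 ≤ stairTerm m t δ * (1 - cos u) :=
  mul_nonneg (stairTerm_nonneg m t δ) (one_sub_cos_nonneg u)

lemma summable_stairTerm_mul_one_sub_cos (p m : ℕ) {t : ℝ} (ht : 0 < t) (θ : ℝ) :
    Summable fun δ : Fin (p + 1) → ℕ+ =>
      stairTerm (m + 1) t δ * (1 - cos (tupleProd δ * θ)) := by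
  refine .of_nonneg_of_le (fun δ => stairTerm_mul_one_sub_cos_nonneg _ _ _ δ) (fun δ => ?_)
    ((summable_stairTerm p m ht).mul_right 2)
  refine mul_le_mul_of_nonneg_left ?_ (stairTerm_nonneg _ _ δ)
  linarith [neg_one_le_cos (tupleProd δ * θ)]

lemma tupleProd_cons_one (p : ℕ) (d : ℕ+) :
    tupleProd (Fin.cons d 1 : Fin (p + 1) → ℕ+) = d := by
  simp [tupleProd, Fin.prod_univ_succ]

lemma stairTerm_succ_cons_one (p m : ℕ) (t : ℝ) (d : ℕ+) :
    stairTerm (m + 1) t (Fin.cons d 1 : Fin (p + 1) → ℕ+) = d ^ m * exp (-(d * t)) := by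
  simp [stairTerm_succ_cons, zetaWeight, tupleProd]

lemma sum_le_cosDefect (p m : ℕ) {t : ℝ} (ht : 0 < t) (θ : ℝ) {s : Finset ℕ}
    (hs : ∀ d ∈ s, 0 < d) :
    ∑ d ∈ s, (d : ℝ) ^ m * exp (-(d * t)) * (1 - cos (d * θ)) ≤
      cosDefect (p + 1) (m + 1) t θ := by
  let single (d : ℕ) : Fin (p + 1) → ℕ+ := Fin.cons d.toPNat' 1
  have hcoe (d : ℕ) (hd : d ∈ s) : (d.toPNat' : ℕ) = d := by simp [(hs d hd).ne']
  have hinj : Set.InjOn single s := fun a ha b hb hab => by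
    rw [← hcoe a ha, ← hcoe b hb]
    exact congrArg PNat.val (congrFun hab 0)
  have hsum : ∑ d ∈ s, (d : ℝ) ^ m * exp (-(d * t)) * (1 - cos (d * θ)) =
      ∑ δ ∈ s.image single, stairTerm (m + 1) t δ * (1 - cos (tupleProd δ * θ)) := by
    rw [Finset.sum_image hinj]
    refine Finset.sum_congr rfl fun d hd => ?_
    rw [stairTerm_succ_cons_one, tupleProd_cons_one, hcoe d hd]
  rw [hsum]
  exact (summable_stairTerm_mul_one_sub_cos p m ht θ).sum_le_tsum _ fun δ _ =>
    stairTerm_mul_one_sub_cos_nonneg _ _ _ δ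

lemma pow_mul_exp_mul_min_le_cosDefect (p m : ℕ) {t θ : ℝ} (ht : 0 < t) (hθ : |θ| ≤ π) {N : ℕ}
    (hN : 1 ≤ N) (hNt : N * t ≤ 2) :
    (N : ℝ) ^ m * exp (-8) * min (2 * N ^ 3 * θ ^ 2 / π ^ 2) ((N : ℝ) / 4) ≤
      cosDefect (p + 1) (m + 1) t θ :=
  calc (N : ℝ) ^ m * exp (-8) * min (2 * N ^ 3 * θ ^ 2 / π ^ 2) ((N : ℝ) / 4)
      ≤ (N : ℝ) ^ m * exp (-8) * ∑ d ∈ Finset.Ico N (4 * N), (1 - cos (d * θ)) := by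
        gcongr
        exact min_le_sum_Ico_one_sub_cos hN hθ
    _ ≤ ∑ d ∈ Finset.Ico N (4 * N), (d : ℝ) ^ m * exp (-(d * t)) * (1 - cos (d * θ)) := by
        rw [Finset.mul_sum]
        refine Finset.sum_le_sum fun d hd => ?_
        obtain ⟨hNd, hdN⟩ := Finset.mem_Ico.1 hd
        have hd4 : (d : ℝ) ≤ 4 * N := by exact_mod_cast hdN.le
        have := one_sub_cos_nonneg (d * θ)
        gcongr
        nlinarith
    _ ≤ cosDefect (p + 1) (m + 1) t θ :=
        sum_le_cosDefect p m ht θ fun d hd => hN.trans (Finset.mem_Ico.1 hd).1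

lemma exists_nat_inv_le_and_mul_le_two {t : ℝ} (ht : 0 < t) (ht1 : t ≤ 1) :
    ∃ N : ℕ, 1 ≤ N ∧ 1 / t ≤ N ∧ N * t ≤ 2 := by
  have h1t : 1 ≤ 1 / t := one_le_one_div ht ht1
  refine ⟨⌈1 / t⌉₊, Nat.one_le_ceil_iff.2 (by positivity), Nat.le_ceil _, ?_⟩
  rw [← le_div_iff₀ ht]
  have hlt := Nat.ceil_lt_add_one (zero_le_one.trans h1t)
  rw [show 2 / t = 1 / t + 1 / t by ring]
  linarith

lemma min_le_cosDefect (p m : ℕ) {t θ : ℝ} (ht : 0 < t) (ht1 : t ≤ 1) (hθ : |θ| ≤ π) :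
    exp (-8) / 8 * min (θ ^ 2 / t ^ (m + 3)) ((1 / t) ^ (m + 1)) ≤
      cosDefect (p + 1) (m + 1) t θ := by
  obtain ⟨N, hN, hinvN, hNt⟩ := exists_nat_inv_le_and_mul_le_two ht ht1
  refine le_trans ?_ (pow_mul_exp_mul_min_le_cosDefect p m ht hθ hN hNt)
  have hquadratic : 1 / 8 * (θ ^ 2 / t ^ (m + 3)) ≤ N ^ m * (2 * N ^ 3 * θ ^ 2 / π ^ 2) :=
    calc 1 / 8 * (θ ^ 2 / t ^ (m + 3)) = 2 / 4 ^ 2 * θ ^ 2 * (1 / t) ^ (m + 3) := by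
          rw [one_div_pow]; ring
      _ ≤ 2 / π ^ 2 * θ ^ 2 * N ^ (m + 3) := by
          gcongr
          exact pi_le_four
      _ = N ^ m * (2 * N ^ 3 * θ ^ 2 / π ^ 2) := by ring
  have hflat : 1 / 8 * (1 / t) ^ (m + 1) ≤ N ^ m * ((N : ℝ) / 4) :=
    calc 1 / 8 * (1 / t) ^ (m + 1) ≤ 1 / 4 * (N : ℝ) ^ (m + 1) := by gcongr; norm_num
      _ = N ^ m * ((N : ℝ) / 4) := by ring
  rw [div_eq_mul_one_div, mul_assoc, mul_comm ((N : ℝ) ^ m), mul_assoc,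
    mul_min_of_nonneg _ _ (by positivity : (0 : ℝ) ≤ 1 / 8),
    mul_min_of_nonneg _ _ (by positivity : (0 : ℝ) ≤ (N : ℝ) ^ m)]
  exact mul_le_mul_of_nonneg_left (min_le_min hquadratic hflat) (exp_nonneg _)

/-! ### Expansion at the saddle point -/

/-- The summand of the series in `qfun`, with the staircase index `m` left free. -/
noncomputable def phaseTerm {ℓ : ℕ} (m : ℕ) (t θ : ℝ) (δ : Fin ℓ → ℕ+) : ℂ :=
  stairTerm m t δ * (Complex.exp (Complex.I * (tupleProd δ * θ : ℝ)) - 1)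

lemma qfun_eq_tsum_phaseTerm (p n : ℕ) (y t θ : ℝ) :
    qfun (p + 1) n y t θ =
      Complex.I * n * θ - y * ∑' δ : Fin (p + 1) → ℕ+, phaseTerm p t θ δ := by
  rw [qfun]
  congr 2
  refine tsum_congr fun δ => ?_
  rw [phaseTerm, stairTerm, tupleProd]
  push_cast
  congr 2
  refine Finset.prod_congr rfl fun i _ => ?_
  congr 1
  ring

lemma norm_phaseTerm_le {ℓ : ℕ} (m : ℕ) (t θ : ℝ) (δ : Fin ℓ → ℕ+) :
    ‖phaseTerm m t θ δ‖ ≤ stairTerm m t δ * 2 := by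
  rw [phaseTerm, norm_mul, Complex.norm_of_nonneg (stairTerm_nonneg m t δ)]
  refine mul_le_mul_of_nonneg_left ((norm_sub_le _ _).trans ?_) (stairTerm_nonneg m t δ)
  rw [Complex.norm_exp_I_mul_ofReal, norm_one]
  norm_num

lemma summable_phaseTerm (p m : ℕ) {t : ℝ} (ht : 0 < t) (θ : ℝ) :
    Summable fun δ : Fin (p + 1) → ℕ+ => phaseTerm (m + 1) t θ δ :=
  .of_norm_bounded ((summable_stairTerm p m ht).mul_right 2) fun δ => norm_phaseTerm_le _ t θ δ

lemma continuous_qfun (r n : ℕ) (y : ℝ) {t : ℝ} (ht : 0 < t) :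
    Continuous (qfun (r + 2) n y t) := by
  simp_rw [funext (qfun_eq_tsum_phaseTerm (r + 1) n y t)]
  refine .sub (by fun_prop) (continuous_const.mul ?_)
  refine continuous_tsum (fun δ => ?_) ((summable_stairTerm (r + 1) r ht).mul_right 2)
    fun δ θ => norm_phaseTerm_le _ t θ δ
  unfold phaseTerm
  fun_prop

lemma re_phaseTerm {ℓ : ℕ} (m : ℕ) (t θ : ℝ) (δ : Fin ℓ → ℕ+) :
    (phaseTerm m t θ δ).re = -(stairTerm m t δ * (1 - cos (tupleProd δ * θ))) := by
  rw [phaseTerm, Complex.re_ofReal_mul, Complex.sub_re, mul_comm Complex.I,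
    Complex.exp_ofReal_mul_I_re, Complex.one_re]
  ring

lemma norm_cexp_neg_qfun (r n : ℕ) (y : ℝ) {t : ℝ} (ht : 0 < t) (θ : ℝ) :
    ‖Complex.exp (-qfun (r + 2) n y t θ)‖ = exp (-(y * cosDefect (r + 2) (r + 1) t θ)) := by
  have hre : (Complex.I * n * θ).re = 0 := by simp
  rw [Complex.norm_exp, qfun_eq_tsum_phaseTerm, Complex.neg_re, Complex.sub_re,
    Complex.re_ofReal_mul, Complex.re_tsum (summable_phaseTerm (r + 1) r ht θ), hre]
  simp_rw [re_phaseTerm, tsum_neg]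
  rw [mul_neg, sub_neg_eq_add, zero_add, cosDefect]

lemma norm_phaseTerm_sub_taylor_le {ℓ : ℕ} (m : ℕ) (t θ : ℝ) (δ : Fin ℓ → ℕ+) :
    ‖phaseTerm m t θ δ - (Complex.I * θ * stairTerm (m + 1) t δ -
        θ ^ 2 / 2 * stairTerm (m + 2) t δ)‖ ≤ 4 * |θ| ^ 3 * stairTerm (m + 3) t δ := by
  have hfactor : phaseTerm m t θ δ - (Complex.I * θ * stairTerm (m + 1) t δ -
      θ ^ 2 / 2 * stairTerm (m + 2) t δ) =
      stairTerm m t δ * (Complex.exp (Complex.I * (tupleProd δ * θ : ℝ)) - 1 -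
        Complex.I * (tupleProd δ * θ : ℝ) + ((tupleProd δ * θ : ℝ) : ℂ) ^ 2 / 2) := by
    rw [phaseTerm, stairTerm_add m 1, stairTerm_add m 2]
    push_cast
    ring
  rw [hfactor, norm_mul, Complex.norm_of_nonneg (stairTerm_nonneg m t δ)]
  calc stairTerm m t δ * _ ≤ stairTerm m t δ * (4 * |tupleProd δ * θ| ^ 3) :=
        mul_le_mul_of_nonneg_left (norm_exp_I_mul_sub_taylor_le _) (stairTerm_nonneg m t δ)
    _ = 4 * |θ| ^ 3 * stairTerm (m + 3) t δ := by
        rw [stairTerm_add m 3, abs_mul, abs_of_pos (tupleProd_pos δ)]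
        ring

lemma hasSum_stairTerm (p m : ℕ) {t : ℝ} (ht : 0 < t) :
    HasSum (fun δ : Fin (p + 1) → ℕ+ => stairTerm (m + 1) t δ) (Zstair (p + 1) (m + 1 : ℕ) t) := by
  rw [Zstair_eq_tsum_stairTerm]
  exact (summable_stairTerm p m ht).hasSum

lemma norm_tsum_phaseTerm_sub_taylor_le (p m : ℕ) {t : ℝ} (ht : 0 < t) (θ : ℝ) :
    ‖∑' δ : Fin (p + 1) → ℕ+, phaseTerm (m + 1) t θ δ -
        (Complex.I * θ * Zstair (p + 1) (m + 2 : ℕ) t -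
          θ ^ 2 / 2 * Zstair (p + 1) (m + 3 : ℕ) t)‖ ≤
      4 * |θ| ^ 3 * Zstair (p + 1) (m + 4 : ℕ) t := by
  have hfirst := Complex.hasSum_ofReal.2 (hasSum_stairTerm p (m + 1) ht)
  have hsecond := Complex.hasSum_ofReal.2 (hasSum_stairTerm p (m + 2) ht)
  have hdiff := (summable_phaseTerm p m ht θ).hasSum.sub
    ((hfirst.mul_left (Complex.I * θ)).sub (hsecond.mul_left ((θ : ℂ) ^ 2 / 2)))
  have hbound := tsum_of_norm_bounded ((hasSum_stairTerm p (m + 3) ht).mul_left (4 * |θ| ^ 3))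
    fun δ => norm_phaseTerm_sub_taylor_le (m + 1) t θ δ
  rwa [hdiff.tsum_eq] at hbound

lemma norm_neg_qfun_sub_taylor_le (r n : ℕ) (y : ℝ) {t : ℝ} (ht : 0 < t) (θ : ℝ) :
    ‖-qfun (r + 2) n y t θ -
        (Complex.I * ((y * Zstair (r + 2) (r + 2 : ℕ) t - n : ℝ) : ℂ) * θ -
          ((y * Zstair (r + 2) (r + 3 : ℕ) t : ℝ) : ℂ) * θ ^ 2 / 2)‖ ≤
      |y| * (4 * |θ| ^ 3 * Zstair (r + 2) (r + 4 : ℕ) t) := by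
  have hfactor : -qfun (r + 2) n y t θ -
      (Complex.I * ((y * Zstair (r + 2) (r + 2 : ℕ) t - n : ℝ) : ℂ) * θ -
        ((y * Zstair (r + 2) (r + 3 : ℕ) t : ℝ) : ℂ) * θ ^ 2 / 2) =
      y * (∑' δ : Fin (r + 2) → ℕ+, phaseTerm (r + 1) t θ δ -
        (Complex.I * θ * Zstair (r + 2) (r + 2 : ℕ) t -
          θ ^ 2 / 2 * Zstair (r + 2) (r + 3 : ℕ) t)) := by
    rw [qfun_eq_tsum_phaseTerm]
    push_cast
    ring
  rw [hfactor, norm_mul, Complex.norm_real, Real.norm_eq_abs]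
  exact mul_le_mul_of_nonneg_left (norm_tsum_phaseTerm_sub_taylor_le (r + 1) r ht θ) (abs_nonneg _)

/-- The width `t^{(r+3)/2}` of the saddle at height `t` for `ℓ = r + 2`: in the variable
`θ = saddleScale r t * φ` the quadratic term of `q` stays of order one. -/
noncomputable def saddleScale (r : ℕ) (t : ℝ) : ℝ := √(t ^ (r + 3))

lemma saddleScale_pos (r : ℕ) {t : ℝ} (ht : 0 < t) : 0 < saddleScale r t :=
  Real.sqrt_pos.2 (pow_pos ht _)

lemma saddleScale_sq (r : ℕ) {t : ℝ} (ht : 0 < t) : saddleScale r t ^ 2 = t ^ (r + 3) :=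
  Real.sq_sqrt (pow_pos ht _).le

lemma saddleScale_pow_three (r : ℕ) {t : ℝ} (ht : 0 < t) :
    saddleScale r t ^ 3 = t ^ (r + 4) * √(t ^ (r + 1)) := by
  have hscale : saddleScale r t = t * √(t ^ (r + 1)) := by
    rw [saddleScale, show t ^ (r + 3) = t ^ 2 * t ^ (r + 1) by ring, Real.sqrt_mul (sq_nonneg t),
      Real.sqrt_sq ht.le]
  rw [pow_succ, saddleScale_sq r ht, hscale]
  ring

lemma tendsto_sqrt_pow_succ (k : ℕ) : Tendsto (fun t : ℝ => √(t ^ (k + 1))) (𝓝[>] 0) (𝓝 0) := by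
  have hcont : Continuous fun t : ℝ => √(t ^ (k + 1)) := by fun_prop
  exact (hcont.tendsto' 0 0 (by simp)).mono_left nhdsWithin_le_nhds

lemma tendsto_saddleScale (r : ℕ) : Tendsto (saddleScale r) (𝓝[>] 0) (𝓝[>] 0) :=
  tendsto_nhdsWithin_iff.2 ⟨tendsto_sqrt_pow_succ (r + 2), by
    filter_upwards [self_mem_nhdsWithin] with t ht using saddleScale_pos r ht⟩

section SaddlePointLimit

variable {r : ℕ} {x c : ℝ} {t y : ℕ → ℝ}

lemma tendsto_taylor_error (ht : Tendsto t atTop (𝓝[>] 0)) (hy : Tendsto y atTop (𝓝 x)) (φ : ℝ) :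
    Tendsto (fun n => |y n| * (4 * |saddleScale r (t n) * φ| ^ 3 *
      Zstair (r + 2) (r + 4 : ℕ) (t n))) atTop (𝓝 0) := by
  have hmoment := (tendsto_pow_mul_Zstair (r + 1) (r + 3)).comp ht
  have hlim := ((hy.abs.mul hmoment).mul ((tendsto_sqrt_pow_succ r).comp ht)).mul_const
    (4 * |φ| ^ 3)
  simp only [mul_zero, zero_mul] at hlim
  refine hlim.congr' ?_
  filter_upwards [ht.eventually self_mem_nhdsWithin] with n (hn : 0 < t n)
  rw [abs_mul, abs_of_pos (saddleScale_pos r hn), mul_pow, saddleScale_pow_three r hn]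
  simp only [Function.comp_apply]
  ring

lemma tendsto_taylor_main (ht : Tendsto t atTop (𝓝[>] 0)) (hy : Tendsto y atTop (𝓝 x))
    (hdrift : Tendsto (fun n => saddleScale r (t n) *
      (y n * Zstair (r + 2) (r + 2 : ℕ) (t n) - n)) atTop (𝓝 c)) (φ : ℝ) :
    Tendsto (fun n : ℕ =>
        Complex.I * ((y n * Zstair (r + 2) (r + 2 : ℕ) (t n) - n : ℝ) : ℂ) *
            (saddleScale r (t n) * φ : ℝ) -
          ((y n * Zstair (r + 2) (r + 3 : ℕ) (t n) : ℝ) : ℂ) *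
            ((saddleScale r (t n) * φ : ℝ) : ℂ) ^ 2 / 2) atTop
      (𝓝 (Complex.I * c * φ - ((r + 2 : ℕ) * (x * Kconst (r + 2)) : ℝ) * φ ^ 2 / 2)) := by
  have hconst : x * ((r + 2).factorial * zetaProd (r + 1)) =
      (r + 2 : ℕ) * (x * Kconst (r + 2)) := by
    rw [Kconst_succ, Nat.factorial_succ (r + 1)]
    push_cast
    ring
  have hvariance : Tendsto (fun n => y n * (t n ^ (r + 3) * Zstair (r + 2) (r + 3 : ℕ) (t n)))
      atTop (𝓝 ((r + 2 : ℕ) * (x * Kconst (r + 2)))) := by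
    rw [← hconst]
    exact hy.mul ((tendsto_pow_mul_Zstair (r + 1) (r + 2)).comp ht)
  have hlim := ((hdrift.ofReal.const_mul Complex.I).mul_const (φ : ℂ)).sub
    ((hvariance.ofReal.mul_const ((φ : ℂ) ^ 2)).div_const 2)
  refine hlim.congr' ?_
  filter_upwards [ht.eventually self_mem_nhdsWithin] with n (hn : 0 < t n)
  have hsq : (saddleScale r (t n) : ℂ) ^ 2 = (t n : ℂ) ^ (r + 3) := by
    exact_mod_cast saddleScale_sq r hn
  push_cast
  rw [mul_pow, hsq]
  ring

lemma tendsto_neg_qfun_saddleScale (ht : Tendsto t atTop (𝓝[>] 0)) (hy : Tendsto y atTop (𝓝 x))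
    (hdrift : Tendsto (fun n => saddleScale r (t n) *
      (y n * Zstair (r + 2) (r + 2 : ℕ) (t n) - n)) atTop (𝓝 c)) (φ : ℝ) :
    Tendsto (fun n : ℕ => -qfun (r + 2) n (y n) (t n) (saddleScale r (t n) * φ)) atTop
      (𝓝 (Complex.I * c * φ - ((r + 2 : ℕ) * (x * Kconst (r + 2)) : ℝ) * φ ^ 2 / 2)) := by
  have herror := squeeze_zero_norm' (by
    filter_upwards [ht.eventually self_mem_nhdsWithin] with n hn
    exact norm_neg_qfun_sub_taylor_le r n (y n) hn (saddleScale r (t n) * φ))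
    (tendsto_taylor_error ht hy φ)
  simpa only [sub_add_cancel, zero_add] using herror.add (tendsto_taylor_main ht hy hdrift φ)

end SaddlePointLimit

lemma norm_cexp_neg_qfun_saddleScale_le (r n : ℕ) {t y c φ : ℝ} (ht : 0 < t) (ht1 : t ≤ 1)
    (hc : 0 < c) (hcy : c ≤ y) (hφ : |saddleScale r t * φ| ≤ π) :
    ‖Complex.exp (-qfun (r + 2) n y t (saddleScale r t * φ))‖ ≤
      6 * exp (c * (exp (-8) / 8)) * (1 + π ^ 2) / (c * (exp (-8) / 8)) ^ 3 * (1 + φ ^ 2)⁻¹ := by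
  have hcube : φ ^ 2 ≤ π ^ 2 * ((1 / t) ^ (r + 1)) ^ 3 := by
    have hscaled : t ^ (r + 3) * φ ^ 2 ≤ π ^ 2 := by
      rw [← saddleScale_sq r ht, ← mul_pow]
      exact sq_le_sq.2 (hφ.trans (le_abs_self π))
    calc φ ^ 2 = t ^ (r + 3) * φ ^ 2 * (1 / t) ^ (r + 3) := by rw [one_div_pow]; field_simp
      _ ≤ π ^ 2 * (1 / t) ^ ((r + 1) * 3) := by
          gcongr
          · exact one_le_one_div ht ht1
          · omega
      _ = π ^ 2 * ((1 / t) ^ (r + 1)) ^ 3 := by rw [pow_mul]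
  have hdefect := min_le_cosDefect (r + 1) r ht ht1 hφ
  rw [mul_pow, saddleScale_sq r ht, mul_div_cancel_left₀ _ (pow_pos ht _).ne'] at hdefect
  have hexponent : c * (exp (-8) / 8) * min (φ ^ 2) ((1 / t) ^ (r + 1)) ≤
      y * cosDefect (r + 2) (r + 1) t (saddleScale r t * φ) := by
    have hy : 0 ≤ y := hc.le.trans hcy
    rw [mul_assoc]
    gcongr
  rw [norm_cexp_neg_qfun r n y ht]
  exact (exp_le_exp.2 (neg_le_neg hexponent)).trans
    (exp_neg_mul_min_le (by positivity) (by positivity) (by positivity) (by positivity) hcube)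

lemma tendsto_inv_saddleScale_smul_integral {r : ℕ} {x c : ℝ} {t y : ℕ → ℝ} (hx : 0 < x)
    (ht : Tendsto t atTop (𝓝[>] 0)) (hy : Tendsto y atTop (𝓝 x))
    (hdrift : Tendsto (fun n => saddleScale r (t n) *
      (y n * Zstair (r + 2) (r + 2 : ℕ) (t n) - n)) atTop (𝓝 c)) :
    Tendsto (fun n : ℕ => (saddleScale r (t n))⁻¹ •
        ∫ θ in (-π)..π, Complex.exp (-qfun (r + 2) n (y n) (t n) θ)) atTop
      (𝓝 ((√(2 * π / ((r + 2 : ℕ) * (x * Kconst (r + 2)))) *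
        exp (-(c ^ 2 / (2 * ((r + 2 : ℕ) * (x * Kconst (r + 2)))))) : ℝ) : ℂ)) := by
  have hK : 0 < Kconst (r + 2) := Kconst_succ_pos (r + 1)
  rw [← integral_cexp_I_mul_sub_sq c (by positivity)]
  refine tendsto_inv_smul_intervalIntegral_of_rescaled pi_pos ((tendsto_saddleScale r).comp ht)
    ?_ ?_ (integrable_inv_one_add_sq.const_mul
      (6 * exp (x / 2 * (exp (-8) / 8)) * (1 + π ^ 2) / (x / 2 * (exp (-8) / 8)) ^ 3)) fun φ => ?_
  · filter_upwards [ht.eventually self_mem_nhdsWithin] with n hn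
    exact Complex.continuous_exp.comp (continuous_qfun r n (y n) hn).neg
  · filter_upwards [ht.eventually (Ioc_mem_nhdsGT one_pos),
      hy.eventually_const_le (half_lt_self hx)] with n hn hyn φ hφ
    exact norm_cexp_neg_qfun_saddleScale_le r n hn.1 hn.2 (half_pos hx) hyn hφ
  · exact (Complex.continuous_exp.tendsto _).comp (tendsto_neg_qfun_saddleScale ht hy hdrift φ)

/-! ### The sequences `b_n`, `x_n` and `t_n` -/

section Exponents

variable {a L : ℝ}

lemma rpow_mul_rpow_eq_self (ha : 0 < a) (hL : L ≠ 0) :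
    a ^ ((L + 1) / (2 * L)) * a ^ ((L - 1) / (2 * L)) = a := by
  rw [← rpow_add ha, show (L + 1) / (2 * L) + (L - 1) / (2 * L) = 1 by field_simp; ring, rpow_one]

lemma rpow_eq_rpow_mul_sqrt (ha : 0 < a) (hL : L ≠ 0) :
    a ^ ((L + 1) / (2 * L)) = a ^ (1 / (2 * L)) * √a := by
  rw [sqrt_eq_rpow, ← rpow_add ha]
  congr 1
  field_simp
  ring

lemma rpow_mul_sqrt_two_pi_div (ha : 0 < a) (hL : 0 < L) :
    a ^ ((L + 1) / (2 * L)) * √(2 * π / (L * a)) = 2 * π * (a ^ (1 / (2 * L)) / √(2 * π * L)) := by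
  have hsqrt : √a * √(2 * π / (L * a)) * √(2 * π * L) = 2 * π := by
    rw [← sqrt_mul ha.le, ← sqrt_mul (by positivity),
      show a * (2 * π / (L * a)) * (2 * π * L) = (2 * π) ^ 2 by field_simp,
      sqrt_sq (by positivity)]
  rw [rpow_eq_rpow_mul_sqrt ha hL.ne', ← mul_div_assoc, eq_div_iff (by positivity)]
  linear_combination a ^ (1 / (2 * L)) * hsqrt

lemma sq_mul_sqrt_mul_sqrt_div (s : ℝ) (ha : 0 < a) (hL : 1 < L) :
    (s * √a * √(L * (L - 1))) ^ 2 / (2 * (L * a)) = (L - 1) * s ^ 2 / 2 := by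
  have hL1 : 0 < L - 1 := sub_pos.2 hL
  rw [mul_pow, mul_pow, sq_sqrt ha.le, sq_sqrt (by positivity)]
  field_simp

end Exponents

lemma tendsto_saddleScale_mul_rpow (r : ℕ) {x : ℝ} (hx : 0 < x) :
    Tendsto (fun n : ℕ => saddleScale r (tseq (r + 2) x n) *
        (n : ℝ) ^ ((((r + 2 : ℕ) : ℝ) + 1) / (2 * (r + 2 : ℕ)))) atTop
      (𝓝 ((x * Kconst (r + 2)) ^ ((((r + 2 : ℕ) : ℝ) + 1) / (2 * (r + 2 : ℕ))))) := by
  have hA : 0 < x * Kconst (r + 2) := mul_pos hx (Kconst_succ_pos (r + 1))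
  refine ((tendsto_natCast_mul_tseq_pow (r + 1) hx).rpow_const (.inl hA.ne')).congr' ?_
  filter_upwards [eventually_gt_atTop 0] with n hn
  have ht : 0 < tseq (r + 2) x n := tseq_pos (r + 1) hx hn
  rw [mul_rpow (by positivity) (by positivity), mul_comm, saddleScale, sqrt_eq_rpow,
    ← rpow_natCast, ← rpow_natCast, ← rpow_mul ht.le, ← rpow_mul ht.le]
  congr 2
  push_cast
  field_simp
  ring

section Sequences

variable {ℓ : ℕ} {x : ℝ}

lemma tendsto_bseq_atTop (hℓ : 2 ≤ ℓ) (hA : 0 < x * Kconst ℓ) :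
    Tendsto (bseq ℓ x) atTop atTop := by
  have hℓ1 : 0 < (ℓ : ℝ) - 1 := sub_pos.2 (by exact_mod_cast hℓ)
  have : 0 < (ℓ : ℝ) := by linarith
  exact .const_mul_atTop (by positivity)
    ((tendsto_rpow_atTop (by positivity)).comp tendsto_natCast_atTop_atTop)

lemma tendsto_xseq (s : ℝ) (hℓ : 2 ≤ ℓ) (hA : 0 < x * Kconst ℓ) :
    Tendsto (xseq ℓ x s) atTop (𝓝 x) := by
  have hlim := ((continuous_exp.tendsto _).comp
    ((tendsto_bseq_atTop hℓ hA).const_div_atTop s)).const_mul x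
  rwa [exp_zero, mul_one] at hlim

lemma rpow_eq_mul_bseq (hℓ : 2 ≤ ℓ) (hA : 0 < x * Kconst ℓ) (n : ℕ) :
    (n : ℝ) ^ (((ℓ : ℝ) - 1) / (2 * ℓ)) =
      √(ℓ * (ℓ - 1)) / (x * Kconst ℓ) ^ ((1 : ℝ) / (2 * ℓ)) * bseq ℓ x n := by
  have hℓ1 : 0 < (ℓ : ℝ) - 1 := sub_pos.2 (by exact_mod_cast hℓ)
  have : 0 < (ℓ : ℝ) := by linarith
  have hsqrt : √((ℓ : ℝ) * (ℓ - 1)) ≠ 0 := by positivity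
  have hpow : (x * Kconst ℓ) ^ ((1 : ℝ) / (2 * ℓ)) ≠ 0 := by positivity
  rw [bseq, ← mul_assoc, div_mul_div_cancel₀ hpow, div_self hsqrt, one_mul]

end Sequences

lemma tendsto_saddleScale_mul_drift (r : ℕ) {x : ℝ} (s : ℝ) (hx : 0 < x) :
    Tendsto (fun n : ℕ => saddleScale r (tseq (r + 2) x n) *
        (xseq (r + 2) x s n * Zstair (r + 2) (r + 2 : ℕ) (tseq (r + 2) x n) - n)) atTop
      (𝓝 (s * √(x * Kconst (r + 2)) * √((r + 2 : ℕ) * ((r + 2 : ℕ) - 1)))) := by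
  have hℓ : 2 ≤ r + 2 := Nat.le_add_left 2 r
  have hA : 0 < x * Kconst (r + 2) := mul_pos hx (Kconst_succ_pos (r + 1))
  have hlim := ((tendsto_saddleScale_mul_rpow r hx).mul_const (√((r + 2 : ℕ) * ((r + 2 : ℕ) - 1)) /
    (x * Kconst (r + 2)) ^ ((1 : ℝ) / (2 * (r + 2 : ℕ))))).mul
      ((tendsto_mul_exp_div_sub_one s).comp (tendsto_bseq_atTop hℓ hA))
  have hvalue : s * √(x * Kconst (r + 2)) * √((r + 2 : ℕ) * ((r + 2 : ℕ) - 1)) =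
      (x * Kconst (r + 2)) ^ ((((r + 2 : ℕ) : ℝ) + 1) / (2 * (r + 2 : ℕ))) *
        (√((r + 2 : ℕ) * ((r + 2 : ℕ) - 1)) /
          (x * Kconst (r + 2)) ^ ((1 : ℝ) / (2 * (r + 2 : ℕ)))) * s := by
    rw [rpow_eq_rpow_mul_sqrt hA (by positivity)]
    field_simp
  rw [hvalue]
  refine hlim.congr' ?_
  filter_upwards [eventually_gt_atTop 0] with n hn
  have hdrift : xseq (r + 2) x s n * Zstair (r + 2) (r + 2 : ℕ) (tseq (r + 2) x n) - n =
      n * (exp (s / bseq (r + 2) x n) - 1) := by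
    rw [Zstair_tseq (r + 1) hx hn, xseq]
    field_simp
  have hsplit := rpow_mul_rpow_eq_self (a := n) (L := (r + 2 : ℕ)) (by positivity) (by positivity)
  rw [rpow_eq_mul_bseq hℓ hA] at hsplit
  rw [hdrift, Function.comp_apply]
  linear_combination saddleScale r (tseq (r + 2) x n) * (exp (s / bseq (r + 2) x n) - 1) * hsplit

lemma tendsto_rpow_smul_integral (r : ℕ) {x : ℝ} (s : ℝ) (hx : 0 < x) :
    Tendsto (fun n : ℕ => (n : ℝ) ^ ((((r + 2 : ℕ) : ℝ) + 1) / (2 * (r + 2 : ℕ))) •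
        ∫ θ in (-π)..π,
          Complex.exp (-qfun (r + 2) n (xseq (r + 2) x s n) (tseq (r + 2) x n) θ)) atTop
      (𝓝 ((2 * π * ((x * Kconst (r + 2)) ^ ((1 : ℝ) / (2 * (r + 2 : ℕ))) /
        √(2 * π * (r + 2 : ℕ)) * exp (-((r + 2 : ℕ) - 1) * s ^ 2 / 2)) : ℝ) : ℂ)) := by
  have hℓ : 1 < ((r + 2 : ℕ) : ℝ) := by exact_mod_cast Nat.le_add_left 2 r
  have hA : 0 < x * Kconst (r + 2) := mul_pos hx (Kconst_succ_pos (r + 1))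
  have hintegral := tendsto_inv_saddleScale_smul_integral hx (tendsto_tseq (r + 1) hx)
    (tendsto_xseq s (Nat.le_add_left 2 r) hA) (tendsto_saddleScale_mul_drift r s hx)
  have hlim := (tendsto_saddleScale_mul_rpow r hx).smul hintegral
  rw [Complex.real_smul, ← Complex.ofReal_mul, ← mul_assoc,
    rpow_mul_sqrt_two_pi_div hA (by positivity), sq_mul_sqrt_mul_sqrt_div s hA hℓ, mul_assoc,
    ← neg_div, ← neg_mul] at hlim
  refine hlim.congr' ?_
  filter_upwards [eventually_gt_atTop 0] with n hn
  have hscale := saddleScale_pos r (tseq_pos (r + 1) hx hn)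
  rw [smul_smul, mul_right_comm, mul_inv_cancel₀ hscale.ne', one_mul]

/-- asymptotics of the integral
`J_{ℓ,n}(x_n,t_n) ~ ((x K_ℓ)^{1/(2ℓ)}/√(2πℓ)) n^{-(ℓ+1)/(2ℓ)} e^{-(ℓ-1)s²/2}`. -/
theorem J_integral_asymptotic (ℓ : ℕ) (hℓ : 2 ≤ ℓ) (x s : ℝ) (hx : 0 < x) :
    Tendsto (fun n : ℕ =>
        (((1 / (2 * π) : ℝ) : ℂ) *
            ∫ θ in (-π)..π, Complex.exp (-qfun ℓ n (xseq ℓ x s n) (tseq ℓ x n) θ)) /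
          ((((x * Kconst ℓ) ^ ((1 : ℝ) / (2 * (ℓ : ℝ))) / Real.sqrt (2 * π * (ℓ : ℝ)) *
              (n : ℝ) ^ (-(((ℓ : ℝ) + 1) / (2 * (ℓ : ℝ)))) *
              Real.exp (-((ℓ : ℝ) - 1) * s ^ 2 / 2) : ℝ) : ℂ)))
      atTop (nhds 1) := by
  obtain ⟨r, rfl⟩ : ∃ r, ℓ = r + 2 := Nat.exists_eq_add_of_le' hℓ
  have hA : 0 < x * Kconst (r + 2) := mul_pos hx (Kconst_succ_pos (r + 1))
  have hlimit_ne : ((2 * π * ((x * Kconst (r + 2)) ^ ((1 : ℝ) / (2 * (r + 2 : ℕ))) /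
      √(2 * π * (r + 2 : ℕ)) * exp (-((r + 2 : ℕ) - 1) * s ^ 2 / 2)) : ℝ) : ℂ) ≠ 0 :=
    Complex.ofReal_ne_zero.2 (by positivity)
  have hratio := (tendsto_rpow_smul_integral r s hx).div tendsto_const_nhds hlimit_ne
  rw [div_self hlimit_ne] at hratio
  refine hratio.congr fun n => ?_
  rw [Pi.div_apply, rpow_neg n.cast_nonneg, Complex.real_smul]
  push_cast
  field_simp
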